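/- Injectivity of the embedding 𝓘 of probability measures into linear forms on C²_Lip. Let H be a separable real Hilbert space and let μ₁, μ₂ be Borel probability measures on H with ∫_H ‖x‖_H μ₁(dx) < ∞ and ∫_H ‖x‖_H μ₂(dx) < ∞. If ∫_H φ(x) μ₁(dx) = ∫_H φ(x) μ₂(dx) for every φ ∈ C²_Lip(H, ℝ), then μ₁ = μ₂. Equivalently, the map 𝓘 sending such a measure μ to the linear functional C²_Lip(H,ℝ) ∋ φ ↦ ∫_H φ dμ is injective. (Each φ ∈ C²_Lip(H,ℝ) is globally Lipschitz, so the integrals exist.) -/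

import Mathlib

open MeasureTheory
open scoped ENNReal NNReal

/-- The `C^n_Lip` norm of the paper:
`‖φ‖_{C^n_Lip} = ‖φ(0)‖ + Σ_{i=1}^n sup_v ‖φ^{(i)}(v)‖ + sup_{v≠w} ‖φ^{(n)}(v)−φ^{(n)}(w)‖/‖v−w‖`,
as an element of `[0,∞]`. -/
noncomputable def CnLipNorm {V₁ V₂ : Type*} [NormedAddCommGroup V₁] [NormedSpace ℝ V₁]
    [NormedAddCommGroup V₂] [NormedSpace ℝ V₂] (n : ℕ) (φ : V₁ → V₂) : ℝ≥0∞ :=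
  (‖φ 0‖₊ : ℝ≥0∞)
    + ∑ i ∈ Finset.Icc 1 n, ⨆ v : V₁, (‖iteratedFDeriv ℝ i φ v‖₊ : ℝ≥0∞)
    + ⨆ (v : V₁) (w : V₁) (_ : v ≠ w),
        (‖iteratedFDeriv ℝ n φ v - iteratedFDeriv ℝ n φ w‖₊ : ℝ≥0∞) / (‖v - w‖₊ : ℝ≥0∞)

/-!
Ridge functions `cos ∘ L` and `sin ∘ L` with `L` a continuous linear functional are smooth with
every derivative bounded (that of order `i` by `‖L‖ ^ i`), so they lie in `C^n_Lip` for every `n`.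
Their integrals are the real and imaginary parts of the characteristic functional, which determines
a finite measure on a separable Banach space.
-/

open scoped BoundedContinuousFunction ContDiff

section CnLip

variable {E F G : Type*} [NormedAddCommGroup E] [NormedSpace ℝ E]
  [NormedAddCommGroup F] [NormedSpace ℝ F] [NormedAddCommGroup G] [NormedSpace ℝ G]

lemma lipschitzWith_iteratedFDeriv_of_nnnorm_succ_le {n : ℕ} {φ : E → F} {C : ℝ≥0}
    (hφ : ContDiff ℝ (n + 1) φ) (hC : ∀ v, ‖iteratedFDeriv ℝ (n + 1) φ v‖₊ ≤ C) :
    LipschitzWith C (iteratedFDeriv ℝ n φ) := by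
  refine lipschitzWith_of_nnnorm_fderiv_le (𝕜 := ℝ)
    (hφ.differentiable_iteratedFDeriv (by exact_mod_cast n.lt_succ_self)) fun v ↦ ?_
  rw [← NNReal.coe_le_coe, coe_nnnorm, norm_fderiv_iteratedFDeriv]
  exact hC v

lemma iSup_nnnorm_sub_div_le_of_lipschitzWith {α β : Type*} [SeminormedAddCommGroup α]
    [SeminormedAddCommGroup β] {f : α → β} {C : ℝ≥0} (hf : LipschitzWith C f) :
    ⨆ (v : α) (w : α) (_ : v ≠ w), (‖f v - f w‖₊ : ℝ≥0∞) / (‖v - w‖₊ : ℝ≥0∞) ≤ C := by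
  refine iSup₂_le fun v w ↦ iSup_le fun _ ↦ ENNReal.div_le_of_le_mul ?_
  simpa only [edist_eq_enorm_sub, enorm_eq_nnnorm] using hf v w

lemma cnLipNorm_lt_top_of_nnnorm_iteratedFDeriv_le {n : ℕ} {φ : E → F} {C : ℕ → ℝ≥0}
    (hφ : ContDiff ℝ (n + 1) φ)
    (hC : ∀ i ∈ Finset.Icc 1 (n + 1), ∀ v, ‖iteratedFDeriv ℝ i φ v‖₊ ≤ C i) :
    CnLipNorm n φ < ⊤ := by
  have lipschitz : LipschitzWith (C (n + 1)) (iteratedFDeriv ℝ n φ) :=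
    lipschitzWith_iteratedFDeriv_of_nnnorm_succ_le hφ
      (hC (n + 1) (Finset.right_mem_Icc.2 n.succ_pos))
  -- The binders in `CnLipNorm` extend as far right as possible, so the Lipschitz seminorm of the
  -- `n`-th derivative is added inside each of the suprema over `v`.
  refine ENNReal.add_lt_top.2 ⟨ENNReal.coe_lt_top, ENNReal.sum_lt_top.2 fun i hi ↦ ?_⟩
  have hi' : i ∈ Finset.Icc 1 (n + 1) := Finset.Icc_subset_Icc_right n.le_succ hi
  have sup_le : ⨆ v, ((‖iteratedFDeriv ℝ i φ v‖₊ : ℝ≥0∞) + ⨆ (v : E) (w : E) (_ : v ≠ w),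
      (‖iteratedFDeriv ℝ n φ v - iteratedFDeriv ℝ n φ w‖₊ : ℝ≥0∞) / (‖v - w‖₊ : ℝ≥0∞))
      ≤ C i + C (n + 1) :=
    iSup_le fun v ↦ add_le_add (ENNReal.coe_le_coe.2 (hC i hi' v))
      (iSup_nnnorm_sub_div_le_of_lipschitzWith lipschitz)
  exact sup_le.trans_lt (ENNReal.add_lt_top.2 ⟨ENNReal.coe_lt_top, ENNReal.coe_lt_top⟩)

lemma nnnorm_iteratedFDeriv_comp_continuousLinearMap_le {N : WithTop ℕ∞} {i : ℕ} {g : F → G}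
    (hg : ContDiff ℝ N g) (hi : i ≤ N) (L : E →L[ℝ] F) (v : E) :
    ‖iteratedFDeriv ℝ i (g ∘ L) v‖₊ ≤ ‖iteratedFDeriv ℝ i g (L v)‖₊ * ‖L‖₊ ^ i := by
  rw [L.iteratedFDeriv_comp_right hg v hi]
  simpa [← NNReal.coe_le_coe] using ContinuousMultilinearMap.norm_compContinuousLinearMap_le
    (iteratedFDeriv ℝ i g (L v)) fun _ ↦ L

lemma cnLipNorm_comp_continuousLinearMap_lt_top {n : ℕ} {g : F → G} {C : ℕ → ℝ≥0}
    (hg : ContDiff ℝ (n + 1) g)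
    (hC : ∀ i ∈ Finset.Icc 1 (n + 1), ∀ y, ‖iteratedFDeriv ℝ i g y‖₊ ≤ C i) (L : E →L[ℝ] F) :
    CnLipNorm n (g ∘ L) < ⊤ :=
  cnLipNorm_lt_top_of_nnnorm_iteratedFDeriv_le (C := fun i ↦ C i * ‖L‖₊ ^ i)
    (hg.comp L.contDiff) fun i hi v ↦
      (nnnorm_iteratedFDeriv_comp_continuousLinearMap_le hg
        (by exact_mod_cast (Finset.mem_Icc.1 hi).2) L v).trans
        (mul_le_mul_left (hC i hi (L v)) _)

end CnLip

section CharFunDual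

variable {E : Type*} [NormedAddCommGroup E] [NormedSpace ℝ E] [MeasurableSpace E]

lemma re_charFunDual [OpensMeasurableSpace E] (μ : Measure E) [IsFiniteMeasure μ]
    (L : StrongDual ℝ E) : (charFunDual μ L).re = ∫ x, Real.cos (L x) ∂μ := by
  simpa [charFunDual, BoundedContinuousFunction.probCharDual_apply, Complex.exp_ofReal_mul_I_re]
    using (integral_re ((BoundedContinuousFunction.probCharDual L).integrable μ)).symm

lemma im_charFunDual [OpensMeasurableSpace E] (μ : Measure E) [IsFiniteMeasure μ]
    (L : StrongDual ℝ E) : (charFunDual μ L).im = ∫ x, Real.sin (L x) ∂μ := by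
  simpa [charFunDual, BoundedContinuousFunction.probCharDual_apply, Complex.exp_ofReal_mul_I_im]
    using (integral_im ((BoundedContinuousFunction.probCharDual L).integrable μ)).symm

lemma measure_ext_of_integral_cos_sin [CompleteSpace E] [SecondCountableTopology E] [BorelSpace E]
    {μ ν : Measure E} [IsFiniteMeasure μ] [IsFiniteMeasure ν]
    (hcos : ∀ L : StrongDual ℝ E, ∫ x, Real.cos (L x) ∂μ = ∫ x, Real.cos (L x) ∂ν)
    (hsin : ∀ L : StrongDual ℝ E, ∫ x, Real.sin (L x) ∂μ = ∫ x, Real.sin (L x) ∂ν) :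
    μ = ν := by
  refine Measure.ext_of_charFunDual (funext fun L ↦ Complex.ext ?_ ?_)
  · rw [re_charFunDual, re_charFunDual, hcos]
  · rw [im_charFunDual, im_charFunDual, hsin]

end CharFunDual

theorem measure_ext_of_C2Lip_general {E : Type*} [NormedAddCommGroup E] [NormedSpace ℝ E]
    [CompleteSpace E] [SecondCountableTopology E] [MeasurableSpace E] [BorelSpace E]
    {μ ν : Measure E} [IsFiniteMeasure μ] [IsFiniteMeasure ν]
    (h : ∀ φ : E →ᵇ ℝ, ContDiff ℝ ∞ φ → (∀ n, CnLipNorm n φ < ⊤) →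
      ∫ x, φ x ∂μ = ∫ x, φ x ∂ν) :
    μ = ν := by
  have integral_ridge_eq (g : ℝ → ℝ) (hg : ContDiff ℝ ∞ g)
      (hbound : ∀ i y, |iteratedDeriv i g y| ≤ 1) (L : StrongDual ℝ E) :
      ∫ x, g (L x) ∂μ = ∫ x, g (L x) ∂ν := by
    have hC (i : ℕ) (y : ℝ) : ‖iteratedFDeriv ℝ i g y‖₊ ≤ 1 := by
      rw [← NNReal.coe_le_coe, coe_nnnorm, norm_iteratedFDeriv_eq_norm_iteratedDeriv]
      exact hbound i y
    have hgL : ContDiff ℝ ∞ (g ∘ L) := hg.comp L.contDiff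
    exact h (.ofNormedAddCommGroup (g ∘ L) hgL.continuous 1 fun x ↦ by simpa using hbound 0 (L x))
      hgL fun n ↦ cnLipNorm_comp_continuousLinearMap_lt_top (hg.of_le (by exact_mod_cast le_top))
        (C := fun _ ↦ 1) (fun i _ ↦ hC i) L
  exact measure_ext_of_integral_cos_sin
    (integral_ridge_eq _ Real.contDiff_cos Real.abs_iteratedDeriv_cos_le_one)
    (integral_ridge_eq _ Real.contDiff_sin Real.abs_iteratedDeriv_sin_le_one)

/-- **Injectivity of the embedding `𝓘` of probability measures into linear forms on `C²_Lip`**: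
two Borel probability measures on a separable real Hilbert space with finite first absolute
moments which integrate every `φ ∈ C²_Lip(H,ℝ)` identically are equal. -/
theorem measure_ext_of_C2Lip
    {H : Type*}
    [NormedAddCommGroup H] [InnerProductSpace ℝ H] [CompleteSpace H]
    [SecondCountableTopology H] [MeasurableSpace H] [BorelSpace H]
    (μ₁ μ₂ : Measure H) [IsProbabilityMeasure μ₁] [IsProbabilityMeasure μ₂]
    (hm₁ : (∫⁻ x, (‖x‖₊ : ℝ≥0∞) ∂μ₁) < ⊤) (hm₂ : (∫⁻ x, (‖x‖₊ : ℝ≥0∞) ∂μ₂) < ⊤)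
    (h : ∀ φ : H → ℝ, ContDiff ℝ 2 φ → CnLipNorm 2 φ < ⊤ →
      ∫ x, φ x ∂μ₁ = ∫ x, φ x ∂μ₂) :
    μ₁ = μ₂ := by
  exact measure_ext_of_C2Lip_general fun φ hφ hLip ↦
    h φ (contDiff_infty.1 hφ 2) (hLip 2)
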